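/- arXiv:2307.04253 — 4 statements merged into one kernel-verified Lean document; each statement's English description precedes it below -/
import Mathlib

section
/- Let n ≥ 1 be an integer, c ∈ ℝ, 0 < a < b, and let η : [b^{-n}, a^{-n}] → ℝ be C² with c + s²η(s^{-n}) > 0 for all s ∈ (a,b). Define f(s) = √(c + s²η(s^{-n})) on (a,b). Then for every s ∈ (a,b): f′(s)² + f″(s)·f(s) = η(s^{-n}) + (n(n−3)/2)·s^{-n}·η′(s^{-n}) + (n²/2)·s^{-2n}·η″(s^{-n}). -/
/-- Second displayed computation in the proof of Lemma 2.3: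
for `f(s) = √(c + s²η(s^{-n}))` one has
`f′² + f″f = η(s^{-n}) + (n(n−3)/2) s^{-n} η′(s^{-n}) + (n²/2) s^{-2n} η″(s^{-n})`. -/
theorem stmt_3 (n : ℕ) (hn : 1 ≤ n) (c a b : ℝ) (ha : 0 < a) (hab : a < b)
    (η : ℝ → ℝ)
    (hη : ContDiffOn ℝ 2 η (Set.Icc (b ^ (-(n : ℤ))) (a ^ (-(n : ℤ)))))
    (hpos : ∀ s ∈ Set.Ioo a b, 0 < c + s ^ 2 * η (s ^ (-(n : ℤ))))
    (f : ℝ → ℝ)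
    (hf : ∀ s ∈ Set.Ioo a b, f s = Real.sqrt (c + s ^ 2 * η (s ^ (-(n : ℤ))))) :
    ∀ s ∈ Set.Ioo a b,
      deriv f s ^ 2 + deriv (deriv f) s * f s
        = η (s ^ (-(n : ℤ)))
          + ((n : ℝ) * ((n : ℝ) - 3) / 2) * s ^ (-(n : ℤ)) * deriv η (s ^ (-(n : ℤ)))
          + ((n : ℝ) ^ 2 / 2) * s ^ (-(2 * (n : ℤ))) * deriv (deriv η) (s ^ (-(n : ℤ))) := by
  have hu : ∀ s ∈ Set.Ioo a b, s ^ (-(n : ℤ)) ∈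
      Set.Ioo (b ^ (-(n : ℤ))) (a ^ (-(n : ℤ))) := by
    intro s hs
    have hs0 : 0 < s := ha.trans hs.1
    have hn0 : n ≠ 0 := by omega
    simp only [zpow_neg, zpow_natCast]
    constructor
    · exact inv_strictAnti₀ (by positivity) (pow_lt_pow_left₀ hs.2 hs0.le hn0)
    · exact inv_strictAnti₀ (by positivity) (pow_lt_pow_left₀ hs.1 ha.le hn0)
  have hη' : ContDiffOn ℝ 2 η (Set.Ioo (b ^ (-(n : ℤ))) (a ^ (-(n : ℤ)))) :=
    hη.mono Set.Ioo_subset_Icc_self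
  have h1 : ∀ u ∈ Set.Ioo (b ^ (-(n : ℤ))) (a ^ (-(n : ℤ))), HasDerivAt η (deriv η u) u := by
    intro u hu
    exact ((hη'.differentiableOn (by norm_num)).differentiableAt
      (isOpen_Ioo.mem_nhds hu)).hasDerivAt
  have hη2 : ContDiffOn ℝ 1 (deriv η) (Set.Ioo (b ^ (-(n : ℤ))) (a ^ (-(n : ℤ)))) :=
    hη'.deriv_of_isOpen isOpen_Ioo (by norm_num)
  have h2 : ∀ u ∈ Set.Ioo (b ^ (-(n : ℤ))) (a ^ (-(n : ℤ))),
      HasDerivAt (deriv η) (deriv (deriv η) u) u := by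
    intro u hu
    exact ((hη2.differentiableOn (by norm_num)).differentiableAt
      (isOpen_Ioo.mem_nhds hu)).hasDerivAt
  have hpw : ∀ s ∈ Set.Ioo a b, HasDerivAt (fun s : ℝ => s ^ (-(n : ℤ)))
      (-(n : ℝ) * s ^ (-(n : ℤ)) / s) s := by
    intro s hs
    have hs0 : s ≠ 0 := (ha.trans hs.1).ne'
    refine (hasDerivAt_zpow (-(n : ℤ)) s (Or.inl hs0)).congr_deriv ?_
    rw [zpow_sub_one₀ hs0]
    push_cast
    ring
  have hf1 : ∀ s ∈ Set.Ioo a b, HasDerivAt f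
      ((2 * s * η (s ^ (-(n : ℤ))) - n * (s * s ^ (-(n : ℤ)) * deriv η (s ^ (-(n : ℤ)))))
        / (2 * f s)) s := by
    intro s hs
    have hs0 : s ≠ 0 := (ha.trans hs.1).ne'
    have e : f =ᶠ[nhds s] fun s => Real.sqrt (c + s ^ 2 * η (s ^ (-(n : ℤ)))) :=
      Filter.eventually_of_mem (isOpen_Ioo.mem_nhds hs) hf
    have hc := (h1 _ (hu s hs)).comp s (hpw s hs)
    have hF := (((hasDerivAt_pow 2 s).mul hc).const_add c).sqrt (hpos s hs).ne'
    refine (hF.congr_of_eventuallyEq e).congr_deriv ?_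
    rw [hf s hs]
    simp only [Function.comp]
    congr 1
    field_simp
    push_cast
    ring
  intro s hs
  have hs0 : s ≠ 0 := (ha.trans hs.1).ne'
  have hfs : f s ≠ 0 := by
    rw [hf s hs]
    exact (Real.sqrt_pos.2 (hpos s hs)).ne'
  have e2 : deriv f =ᶠ[nhds s] fun s =>
      (2 * s * η (s ^ (-(n : ℤ))) - n * (s * s ^ (-(n : ℤ)) * deriv η (s ^ (-(n : ℤ)))))
        / (2 * f s) :=
    Filter.eventually_of_mem (isOpen_Ioo.mem_nhds hs) fun x hx => (hf1 x hx).deriv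
  have hA := ((hasDerivAt_id s).const_mul 2).mul ((h1 _ (hu s hs)).comp s (hpw s hs))
  have hB := ((((hasDerivAt_id s).mul (hpw s hs)).mul
    ((h2 _ (hu s hs)).comp s (hpw s hs))).const_mul (n : ℝ))
  have hC := (hA.sub hB).div ((hf1 s hs).const_mul 2) (mul_ne_zero two_ne_zero hfs)
  have hD := (hC.congr_of_eventuallyEq e2).deriv
  rw [hD, (hf1 s hs).deriv]
  have e3 : s ^ (-(2 * (n : ℤ))) = (s ^ (-(n : ℤ))) ^ 2 := by
    rw [← zpow_natCast, ← zpow_mul]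
    congr 1
    push_cast
    ring
  rw [e3]
  simp only [Function.comp, id, Pi.mul_apply, Pi.sub_apply]
  generalize deriv (deriv η) (s ^ (-(n : ℤ))) = y2
  generalize deriv η (s ^ (-(n : ℤ))) = y1
  generalize η (s ^ (-(n : ℤ))) = y0
  generalize s ^ (-(n : ℤ)) = u
  generalize f s = w at *
  field_simp
  ring
end

section
/- Let ρ̄ ∈ (0, ∞], let U ⊆ ℝ be an open interval, let f : (0, ρ̄) × U → (0, ∞) be C², and let φ : (0, ρ̄) → ℝ be C² with φ′(ρ) ≠ 0 for all ρ. Assume that at every point (ρ, θ): ∂ρ∂θ f − (φ″(ρ)/φ′(ρ))·∂θ f = 2·∂ρ f·∂θ f / f. Then for all ρ₁, ρ₂ ∈ (0, ρ̄) and all θ ∈ U: ∂θ(1/f)(ρ₂, θ) = (φ′(ρ₂)/φ′(ρ₁)) · ∂θ(1/f)(ρ₁, θ). -/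
/-- Equation (3.18) of the paper:
`∂θ(1/f)(ρ₂,θ) = (φ′(ρ₂)/φ′(ρ₁)) ∂θ(1/f)(ρ₁,θ)` (proof of Theorem 3.1). -/
theorem stmt_10 (ρbar : EReal) (hρbar : 0 < ρbar)
    (U : Set ℝ) (hU : IsOpen U) (hU' : U.OrdConnected)
    (f : ℝ → ℝ → ℝ)
    (hf : ContDiffOn ℝ 2 (fun p : ℝ × ℝ => f p.1 p.2)
      ({ρ : ℝ | 0 < ρ ∧ (ρ : EReal) < ρbar} ×ˢ U))
    (hfpos : ∀ ρ : ℝ, 0 < ρ → (ρ : EReal) < ρbar → ∀ θ ∈ U, 0 < f ρ θ)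
    (φ : ℝ → ℝ) (hφ : ContDiffOn ℝ 2 φ {ρ : ℝ | 0 < ρ ∧ (ρ : EReal) < ρbar})
    (hφ' : ∀ ρ : ℝ, 0 < ρ → (ρ : EReal) < ρbar → deriv φ ρ ≠ 0)
    (hPDE : ∀ ρ : ℝ, 0 < ρ → (ρ : EReal) < ρbar → ∀ θ ∈ U,
      deriv (fun r => deriv (fun t => f r t) θ) ρ
          - (deriv (deriv φ) ρ / deriv φ ρ) * deriv (fun t => f ρ t) θ
        = 2 * deriv (fun r => f r θ) ρ * deriv (fun t => f ρ t) θ / f ρ θ) :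
    ∀ ρ₁ ρ₂ : ℝ, 0 < ρ₁ → (ρ₁ : EReal) < ρbar → 0 < ρ₂ → (ρ₂ : EReal) < ρbar →
      ∀ θ ∈ U,
        deriv (fun t => 1 / f ρ₂ t) θ
          = (deriv φ ρ₂ / deriv φ ρ₁) * deriv (fun t => 1 / f ρ₁ t) θ := by
  intro ρ₁ ρ₂ h1 h1' h2 h2' θ hθ
  set I : Set ℝ := {ρ : ℝ | 0 < ρ ∧ (ρ : EReal) < ρbar} with hI
  have hIo : IsOpen I := by
    apply IsOpen.inter
    · exact isOpen_lt continuous_const continuous_id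
    · exact isOpen_lt continuous_coe_real_ereal continuous_const
  have hIc : IsPreconnected I := by
    apply Set.OrdConnected.isPreconnected
    refine ⟨fun x hx y hy z hz => ⟨lt_of_lt_of_le hx.1 hz.1, lt_of_le_of_lt ?_ hy.2⟩⟩
    exact_mod_cast hz.2
  have hDo : IsOpen (I ×ˢ U) := hIo.prod hU
  set F : ℝ × ℝ → ℝ := fun p => f p.1 p.2 with hF
  have hFd : ∀ r ∈ I, DifferentiableAt ℝ F (r, θ) := fun r hr =>
    (hf.differentiableOn (by norm_num)).differentiableAt (hDo.mem_nhds ⟨hr, hθ⟩)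
  have hft : ∀ r ∈ I, HasDerivAt (fun t => f r t) (fderiv ℝ F (r, θ) (0, 1)) θ := by
    intro r hr
    have h := (hFd r hr).hasFDerivAt.comp_hasDerivAt θ
      ((hasDerivAt_const θ r).prodMk (hasDerivAt_id θ))
    exact h
  have hfr : ∀ r ∈ I, DifferentiableAt ℝ (fun r => f r θ) r := by
    intro r hr
    have h := (hFd r hr).hasFDerivAt.comp_hasDerivAt r
      ((hasDerivAt_id r).prodMk (hasDerivAt_const r θ))
    exact h.differentiableAt
  have hg : ∀ r ∈ I, DifferentiableAt ℝ (fun r => deriv (fun t => f r t) θ) r := by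
    intro r hr
    have hD : DifferentiableAt ℝ (fderiv ℝ F) (r, θ) :=
      ((hf.fderiv_of_isOpen (m := 1) hDo (by norm_num)).differentiableOn
        (by norm_num)).differentiableAt (hDo.mem_nhds ⟨hr, hθ⟩)
    have h : DifferentiableAt ℝ (fun s => fderiv ℝ F (s, θ) (0, 1)) r := by
      have h0 : DifferentiableAt ℝ (fun s : ℝ => fderiv ℝ F (s, θ)) r :=
        DifferentiableAt.comp (f := fun s : ℝ => (s, θ)) r hD (by fun_prop)
      exact h0.clm_apply (differentiableAt_const _)
    refine h.congr_of_eventuallyEq ?_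
    filter_upwards [hIo.mem_nhds hr] with s hs
    exact (hft s hs).deriv
  have hp : ∀ r ∈ I, DifferentiableAt ℝ (deriv φ) r := fun r hr =>
    ((hφ.deriv_of_isOpen (m := 1) hIo (by norm_num)).differentiableOn
        (by norm_num)).differentiableAt (hIo.mem_nhds hr)
  have key : ∀ r ∈ I, HasDerivAt
      (fun r => deriv (fun t => f r t) θ / ((f r θ) ^ 2 * deriv φ r)) 0 r := by
    intro r hr
    have hfp := (hfpos r hr.1 hr.2 θ hθ).ne'
    have hφp := hφ' r hr.1 hr.2
    have h := (hg r hr).hasDerivAt.div (((hfr r hr).hasDerivAt.pow 2).mul (hp r hr).hasDerivAt)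
      (mul_ne_zero (pow_ne_zero 2 hfp) hφp)
    refine h.congr_deriv ?_
    have e := hPDE r hr.1 hr.2 θ hθ
    rw [sub_eq_iff_eq_add] at e
    rw [e]
    simp only [Pi.pow_apply, Pi.mul_apply]
    field_simp
    ring
  have hc := hIo.is_const_of_deriv_eq_zero hIc
    (fun r hr => (key r hr).differentiableAt.differentiableWithinAt)
    (fun r hr => (key r hr).deriv) (show ρ₂ ∈ I from ⟨h2, h2'⟩) (show ρ₁ ∈ I from ⟨h1, h1'⟩)
  have hd : ∀ r ∈ I, deriv (fun t => 1 / f r t) θ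
      = - deriv (fun t => f r t) θ / (f r θ) ^ 2 := by
    intro r hr
    have hfp := (hfpos r hr.1 hr.2 θ hθ).ne'
    simp only [one_div]
    exact ((hft r hr).differentiableAt.hasDerivAt.fun_inv hfp).deriv
  rw [hd ρ₁ ⟨h1, h1'⟩, hd ρ₂ ⟨h2, h2'⟩]
  have a1 := (hfpos ρ₁ h1 h1' θ hθ).ne'
  have a2 := (hfpos ρ₂ h2 h2' θ hθ).ne'
  have b1 := hφ' ρ₁ h1 h1'
  have b2 := hφ' ρ₂ h2 h2'
  rw [div_eq_div_iff (by positivity) (by positivity)] at hc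
  field_simp
  linear_combination -hc
end

section
/- Let ρ̄ ∈ (0, ∞], let U ⊆ ℝ be an open interval, let f : (0, ρ̄) × U → (0, ∞) be C², and let φ : (0, ρ̄) → ℝ be C² with φ′(ρ) ≠ 0 for all ρ. Assume that at every point (ρ, θ): ∂ρ∂θ f − (φ″(ρ)/φ′(ρ))·∂θ f = 2·∂ρ f·∂θ f / f. Then for all ρ₁, ρ₂ ∈ (0, ρ̄) and all θ₀, θ₁ ∈ U: ( φ′(ρ₂) f(ρ₂,θ₀) − φ′(ρ₂) f(ρ₂,θ₁) ) / ( φ′(ρ₂)² f(ρ₂,θ₀) f(ρ₂,θ₁) ) = ( φ′(ρ₁) f(ρ₁,θ₀) − φ′(ρ₁) f(ρ₁,θ₁) ) / ( φ′(ρ₁)² f(ρ₁,θ₀) f(ρ₁,θ₁) ). -/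
/-- The key identity (3.19) of the paper, obtained integrating (3.18) in `θ`. -/
theorem stmt_11 (ρbar : EReal) (hρbar : 0 < ρbar)
    (U : Set ℝ) (hU : IsOpen U) (hU' : U.OrdConnected)
    (f : ℝ → ℝ → ℝ)
    (hf : ContDiffOn ℝ 2 (fun p : ℝ × ℝ => f p.1 p.2)
      ({ρ : ℝ | 0 < ρ ∧ (ρ : EReal) < ρbar} ×ˢ U))
    (hfpos : ∀ ρ : ℝ, 0 < ρ → (ρ : EReal) < ρbar → ∀ θ ∈ U, 0 < f ρ θ)
    (φ : ℝ → ℝ) (hφ : ContDiffOn ℝ 2 φ {ρ : ℝ | 0 < ρ ∧ (ρ : EReal) < ρbar})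
    (hφ' : ∀ ρ : ℝ, 0 < ρ → (ρ : EReal) < ρbar → deriv φ ρ ≠ 0)
    (hPDE : ∀ ρ : ℝ, 0 < ρ → (ρ : EReal) < ρbar → ∀ θ ∈ U,
      deriv (fun r => deriv (fun t => f r t) θ) ρ
          - (deriv (deriv φ) ρ / deriv φ ρ) * deriv (fun t => f ρ t) θ
        = 2 * deriv (fun r => f r θ) ρ * deriv (fun t => f ρ t) θ / f ρ θ) :
    ∀ ρ₁ ρ₂ : ℝ, 0 < ρ₁ → (ρ₁ : EReal) < ρbar → 0 < ρ₂ → (ρ₂ : EReal) < ρbar →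
      ∀ θ₀ ∈ U, ∀ θ₁ ∈ U,
        (deriv φ ρ₂ * f ρ₂ θ₀ - deriv φ ρ₂ * f ρ₂ θ₁)
            / (deriv φ ρ₂ ^ 2 * f ρ₂ θ₀ * f ρ₂ θ₁)
          = (deriv φ ρ₁ * f ρ₁ θ₀ - deriv φ ρ₁ * f ρ₁ θ₁)
              / (deriv φ ρ₁ ^ 2 * f ρ₁ θ₀ * f ρ₁ θ₁) := by
  set I : Set ℝ := {ρ : ℝ | 0 < ρ ∧ (ρ : EReal) < ρbar} with hI
  have hIo : IsOpen I :=
    (isOpen_lt continuous_const continuous_id).inter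
      (isOpen_lt continuous_coe_real_ereal continuous_const)
  have hIc : IsPreconnected I := by
    apply Set.OrdConnected.isPreconnected
    refine ⟨fun x hx y hy z hz => ⟨lt_of_lt_of_le hx.1 hz.1, lt_of_le_of_lt ?_ hy.2⟩⟩
    exact_mod_cast hz.2
  have hUc : IsPreconnected U := hU'.isPreconnected
  have hDo : IsOpen (I ×ˢ U) := hIo.prod hU
  have hFd : ∀ r ∈ I, ∀ t ∈ U, HasFDerivAt (fun p : ℝ × ℝ => f p.1 p.2)
      (fderiv ℝ (fun p : ℝ × ℝ => f p.1 p.2) (r, t)) (r, t) := fun r hr t ht =>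
    ((hf.differentiableOn (by norm_num)).differentiableAt
      (hDo.mem_nhds ⟨hr, ht⟩)).hasFDerivAt
  have hT : ∀ r ∈ I, ∀ t ∈ U, HasDerivAt (fun t => f r t)
      (fderiv ℝ (fun p : ℝ × ℝ => f p.1 p.2) (r, t) (0, 1)) t := fun r hr t ht =>
    (hFd r hr t ht).comp_hasDerivAt (f := fun t => (r, t)) t
      ((hasDerivAt_const t r).prodMk (hasDerivAt_id t))
  have hR : ∀ r ∈ I, ∀ t ∈ U, HasDerivAt (fun r => f r t)
      (deriv (fun r => f r t) r) r := fun r hr t ht =>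
    ((hFd r hr t ht).comp_hasDerivAt (f := fun r => (r, t)) r
      ((hasDerivAt_id r).prodMk (hasDerivAt_const r t))).differentiableAt.hasDerivAt
  have hT' : ∀ r ∈ I, ∀ t ∈ U, HasDerivAt (fun t => f r t) (deriv (fun t => f r t) t) t :=
    fun r hr t ht => (hT r hr t ht).differentiableAt.hasDerivAt
  have hRT : ∀ r ∈ I, ∀ t ∈ U, HasDerivAt (fun r => deriv (fun t => f r t) t)
      (deriv (fun r => deriv (fun t => f r t) t) r) r := by
    intro r hr t ht
    have h1 : DifferentiableAt ℝ (fderiv ℝ (fun p : ℝ × ℝ => f p.1 p.2)) (r, t) :=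
      ((hf.fderiv_of_isOpen hDo (m := 1) (by norm_num)).differentiableOn
        (by norm_num)).differentiableAt (hDo.mem_nhds ⟨hr, ht⟩)
    have h2 : DifferentiableAt ℝ (fun r => (r, t)) r := by fun_prop
    have h3 : DifferentiableAt ℝ
        (fun r => fderiv ℝ (fun p : ℝ × ℝ => f p.1 p.2) (r, t)) r :=
      DifferentiableAt.comp (f := fun r => (r, t)) r h1 h2
    have h4 : DifferentiableAt ℝ
        (fun r => fderiv ℝ (fun p : ℝ × ℝ => f p.1 p.2) (r, t) (0, 1)) r :=
      h3.clm_apply (differentiableAt_const _)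
    refine (h4.congr_of_eventuallyEq ?_).hasDerivAt
    filter_upwards [hIo.mem_nhds hr] with s hs using (hT s hs t ht).deriv
  have hP : ∀ r ∈ I, HasDerivAt (deriv φ) (deriv (deriv φ) r) r := fun r hr =>
    (((hφ.deriv_of_isOpen hIo (m := 1) (by norm_num)).differentiableOn
      (by norm_num)).differentiableAt (hIo.mem_nhds hr)).hasDerivAt
  have key : ∀ t ∈ U, ∀ r ∈ I, ∀ s ∈ I,
      deriv (fun t => f r t) t / (deriv φ r * f r t ^ 2)
        = deriv (fun t => f s t) t / (deriv φ s * f s t ^ 2) := by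
    intro t ht r hr s hs
    have hd : ∀ r ∈ I, HasDerivAt
        (fun r => deriv (fun t => f r t) t / (deriv φ r * f r t ^ 2)) 0 r := by
      intro r hr
      have hf0 := (hfpos r hr.1 hr.2 t ht).ne'
      have hp0 := hφ' r hr.1 hr.2
      have h := (hRT r hr t ht).div ((hP r hr).mul ((hR r hr t ht).pow 2))
        (mul_ne_zero hp0 (pow_ne_zero 2 hf0))
      refine h.congr_deriv ?_
      have e := hPDE r hr.1 hr.2 t ht
      rw [sub_eq_iff_eq_add] at e
      simp only [Pi.mul_apply, Pi.pow_apply]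
      rw [e]
      field_simp
      push_cast
      ring
    exact hIo.is_const_of_deriv_eq_zero hIc
      (fun r hr => (hd r hr).differentiableAt.differentiableWithinAt)
      (fun r hr => (hd r hr).deriv) hr hs
  intro a b ha ha' hb hb' x hx y hy
  have hd : ∀ t ∈ U, HasDerivAt
      (fun t => (deriv φ b)⁻¹ * (f b t)⁻¹ - (deriv φ a)⁻¹ * (f a t)⁻¹) 0 t := by
    intro t ht
    have hfa := (hfpos a ha ha' t ht).ne'
    have hfb := (hfpos b hb hb' t ht).ne'
    have hpa := hφ' a ha ha'
    have hpb := hφ' b hb hb'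
    have h := (((hT' b ⟨hb, hb'⟩ t ht).fun_inv hfb).const_mul (deriv φ b)⁻¹).sub
      (((hT' a ⟨ha, ha'⟩ t ht).fun_inv hfa).const_mul (deriv φ a)⁻¹)
    refine h.congr_deriv ?_
    have e := key t ht a ⟨ha, ha'⟩ b ⟨hb, hb'⟩
    have e1 : ∀ p q g : ℝ, p⁻¹ * (-q / g ^ 2) = -(q / (p * g ^ 2)) := by
      intro p q g
      simp only [div_eq_mul_inv, mul_inv]
      ring
    rw [e1, e1, e]
    ring
  have hc := hU.is_const_of_deriv_eq_zero hUc
      (fun r hr => (hd r hr).differentiableAt.differentiableWithinAt)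
      (fun r hr => (hd r hr).deriv) hx hy
  have e2 : ∀ p u v : ℝ, p ≠ 0 → u ≠ 0 → v ≠ 0 →
      (p * u - p * v) / (p ^ 2 * u * v) = p⁻¹ * v⁻¹ - p⁻¹ * u⁻¹ := by
    intro p u v hp hu hv
    field_simp
  rw [e2 _ _ _ (hφ' b hb hb') (hfpos b hb hb' x hx).ne' (hfpos b hb hb' y hy).ne',
    e2 _ _ _ (hφ' a ha ha') (hfpos a ha ha' x hx).ne' (hfpos a ha ha' y hy).ne']
  linarith
end

section
/- Let U ⊆ ℝ be an open interval, let f : (0, ∞) × U → (0, ∞) be C², and let φ : (0, ∞) → ℝ be C² with φ′(ρ) ≠ 0 for all ρ. Assume that at every point (ρ, θ): ∂ρ∂θ f − (φ″(ρ)/φ′(ρ))·∂θ f = 2·∂ρ f·∂θ f / f. Assume moreover that there exists a constant L ≠ 0 such that for every θ ∈ U, φ′(ρ)·f(ρ,θ) → L as ρ → ∞. Then ∂θ f ≡ 0 on (0, ∞) × U; that is, f depends on ρ alone. -/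
/-- Central analytic step in the proof of Theorem 3.1: equation (3.15) together with
`φ′ f → L ≠ 0` as `ρ → ∞` forces `f` to depend on `ρ` alone. -/
theorem stmt_12 (U : Set ℝ) (hU : IsOpen U) (hU' : U.OrdConnected)
    (f : ℝ → ℝ → ℝ)
    (hf : ContDiffOn ℝ 2 (fun p : ℝ × ℝ => f p.1 p.2) (Set.Ioi (0 : ℝ) ×ˢ U))
    (hfpos : ∀ ρ : ℝ, 0 < ρ → ∀ θ ∈ U, 0 < f ρ θ)
    (φ : ℝ → ℝ) (hφ : ContDiffOn ℝ 2 φ (Set.Ioi (0 : ℝ)))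
    (hφ' : ∀ ρ : ℝ, 0 < ρ → deriv φ ρ ≠ 0)
    (hPDE : ∀ ρ : ℝ, 0 < ρ → ∀ θ ∈ U,
      deriv (fun r => deriv (fun t => f r t) θ) ρ
          - (deriv (deriv φ) ρ / deriv φ ρ) * deriv (fun t => f ρ t) θ
        = 2 * deriv (fun r => f r θ) ρ * deriv (fun t => f ρ t) θ / f ρ θ)
    (L : ℝ) (hL : L ≠ 0)
    (hlim : ∀ θ ∈ U,
      Filter.Tendsto (fun ρ => deriv φ ρ * f ρ θ) Filter.atTop (nhds L)) :
    ∀ ρ : ℝ, 0 < ρ → ∀ θ ∈ U, deriv (fun t => f ρ t) θ = 0 := by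
  have hopen : IsOpen (Set.Ioi (0 : ℝ) ×ˢ U) := isOpen_Ioi.prod hU
  set F : ℝ × ℝ → ℝ := fun p => f p.1 p.2 with hF
  have hFat : ∀ ρ : ℝ, 0 < ρ → ∀ θ ∈ U, ContDiffAt ℝ 2 F (ρ, θ) := fun ρ hρ θ hθ =>
    hf.contDiffAt (hopen.mem_nhds ⟨hρ, hθ⟩)
  have hFd : ∀ ρ : ℝ, 0 < ρ → ∀ θ ∈ U, HasFDerivAt F (fderiv ℝ F (ρ, θ)) (ρ, θ) :=
    fun ρ hρ θ hθ => ((hFat ρ hρ θ hθ).differentiableAt (by norm_num)).hasFDerivAt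
  have hθd : ∀ ρ : ℝ, 0 < ρ → ∀ θ ∈ U,
      HasDerivAt (fun t => f ρ t) (fderiv ℝ F (ρ, θ) (0, 1)) θ := fun ρ hρ θ hθ =>
    (hFd ρ hρ θ hθ).comp_hasDerivAt θ ((hasDerivAt_const θ ρ).prodMk (hasDerivAt_id θ))
  have hρd : ∀ ρ : ℝ, 0 < ρ → ∀ θ ∈ U,
      HasDerivAt (fun r => f r θ) (fderiv ℝ F (ρ, θ) (1, 0)) ρ := fun ρ hρ θ hθ =>
    HasFDerivAt.comp_hasDerivAt (f := fun r : ℝ => (r, θ)) ρ (hFd ρ hρ θ hθ)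
      ((hasDerivAt_id ρ).prodMk (hasDerivAt_const ρ θ))
  have hmix : ∀ ρ : ℝ, 0 < ρ → ∀ θ ∈ U,
      DifferentiableAt ℝ (fun r => deriv (fun t => f r t) θ) ρ := by
    intro ρ hρ θ hθ
    have h1 : DifferentiableAt ℝ (fderiv ℝ F) (ρ, θ) :=
      ((hFat ρ hρ θ hθ).fderiv_right (m := 1) (by norm_num)).differentiableAt (by norm_num)
    have h2 : DifferentiableAt ℝ (fun r : ℝ => (r, θ)) ρ := by fun_prop
    have h3 : DifferentiableAt ℝ (fun r : ℝ => fderiv ℝ F (r, θ)) ρ :=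
      DifferentiableAt.comp (g := fderiv ℝ F) (f := fun r : ℝ => (r, θ)) ρ h1 h2
    have h4 : DifferentiableAt ℝ (fun r : ℝ => fderiv ℝ F (r, θ) (0, 1)) ρ :=
      h3.clm_apply (differentiableAt_const _)
    refine h4.congr_of_eventuallyEq ?_
    filter_upwards [Ioi_mem_nhds hρ] with r hr
    exact (hθd r hr θ hθ).deriv
  have hφd : ∀ ρ : ℝ, 0 < ρ → DifferentiableAt ℝ (deriv φ) ρ := by
    intro ρ hρ
    have h1 : ContDiffOn ℝ 1 (deriv φ) (Set.Ioi (0 : ℝ)) :=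
      hφ.deriv_of_isOpen isOpen_Ioi (by norm_num)
    exact (h1.contDiffAt (Ioi_mem_nhds hρ)).differentiableAt (by norm_num)
  have hq : ∀ θ ∈ U, ∀ ρ : ℝ, 0 < ρ → HasDerivAt
      (fun r => deriv (fun t => f r t) θ / ((f r θ) ^ 2 * deriv φ r)) 0 ρ := by
    intro θ hθ ρ hρ
    have hfp := (hfpos ρ hρ θ hθ).ne'
    have hφp := hφ' ρ hρ
    have a := (hmix ρ hρ θ hθ).hasDerivAt
    have b := (hρd ρ hρ θ hθ).differentiableAt.hasDerivAt
    have c := (hφd ρ hρ).hasDerivAt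
    have d := a.div ((b.pow 2).mul c) (mul_ne_zero (pow_ne_zero 2 hfp) hφp)
    have e := hPDE ρ hρ θ hθ
    refine d.congr_deriv ?_
    rw [sub_eq_iff_eq_add] at e
    rw [e]
    simp only [Pi.mul_apply, Pi.pow_apply]
    field_simp
    ring
  have hqc : ∀ θ ∈ U, ∀ ρ : ℝ, 0 < ρ → ∀ ρ' : ℝ, 0 < ρ' →
      deriv (fun t => f ρ t) θ / ((f ρ θ) ^ 2 * deriv φ ρ)
        = deriv (fun t => f ρ' t) θ / ((f ρ' θ) ^ 2 * deriv φ ρ') := by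
    intro θ hθ ρ hρ ρ' hρ'
    exact isOpen_Ioi.is_const_of_deriv_eq_zero (s := Set.Ioi (0 : ℝ))
      (f := fun r => deriv (fun t => f r t) θ / ((f r θ) ^ 2 * deriv φ r)) isPreconnected_Ioi
      (fun r hr => (hq θ hθ r hr).differentiableAt.differentiableWithinAt)
      (fun r hr => (hq θ hθ r hr).deriv) hρ hρ'
  have hg : ∀ ρ : ℝ, 0 < ρ → ∀ θ ∈ U, HasDerivAt (fun t => (deriv φ ρ * f ρ t)⁻¹)
      (-(deriv (fun t => f ρ t) θ / ((f ρ θ) ^ 2 * deriv φ ρ))) θ := by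
    intro ρ hρ θ hθ
    have hfp := (hfpos ρ hρ θ hθ).ne'
    have hφp := hφ' ρ hρ
    have a := (hθd ρ hρ θ hθ).differentiableAt.hasDerivAt
    refine ((a.const_mul (deriv φ ρ)).fun_inv (mul_ne_zero hφp hfp)).congr_deriv ?_
    field_simp
  intro ρ hρ θ hθ
  have hconst : ∀ θ' ∈ U, f ρ θ' = f ρ θ := by
    intro θ' hθ'
    have key : ∀ r : ℝ, 0 < r →
        (deriv φ r * f r θ')⁻¹ - (deriv φ r * f r θ)⁻¹
          = (deriv φ ρ * f ρ θ')⁻¹ - (deriv φ ρ * f ρ θ)⁻¹ := by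
      intro r hr
      have hD : ∀ t ∈ U, HasDerivAt
          (fun t => (deriv φ r * f r t)⁻¹ - (deriv φ ρ * f ρ t)⁻¹) 0 t := by
        intro t ht
        refine ((hg r hr t ht).sub (hg ρ hρ t ht)).congr_deriv ?_
        rw [hqc t ht r hr ρ hρ, sub_self]
      have := hU.is_const_of_deriv_eq_zero
        (f := fun t => (deriv φ r * f r t)⁻¹ - (deriv φ ρ * f ρ t)⁻¹) hU'.isPreconnected
        (fun t ht => (hD t ht).differentiableAt.differentiableWithinAt)
        (fun t ht => (hD t ht).deriv) hθ' hθ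
      linarith
    have hl := ((hlim θ' hθ').inv₀ hL).sub ((hlim θ hθ).inv₀ hL)
    rw [sub_self] at hl
    have hz : (deriv φ ρ * f ρ θ')⁻¹ - (deriv φ ρ * f ρ θ)⁻¹ = 0 := by
      refine tendsto_nhds_unique (tendsto_const_nhds.congr' ?_) hl
      filter_upwards [Filter.eventually_gt_atTop 0] with r hr
      exact (key r hr).symm
    exact mul_left_cancel₀ (hφ' ρ hρ) (inv_injective (sub_eq_zero.mp hz))
  have hev : (fun t => f ρ t) =ᶠ[nhds θ] fun _ => f ρ θ := by
    filter_upwards [hU.mem_nhds hθ] with t ht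
    exact hconst t ht
  rw [hev.deriv_eq]
  simp
end
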